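/- arXiv:2309.12007 — 4 statements merged into one kernel-verified Lean document; each statement's English description precedes it below -/
import Mathlib

section
/- Suppose that for every k ≥ 0 the submodule Nᵏ is a greatest element of the set Sₖ of submodules P ⊆ h⁻ᵏN that are fd-comparable with N (i.e., Nᵏ ∈ Sₖ and P ⊆ Nᵏ for every P ∈ Sₖ). Then for every i ≥ 0 one has: Nⁱ ⊆ N^{i+1}, h·N^{i+1} ⊆ Nⁱ, and Nⁱ = N^{i+1} ∩ h⁻ⁱN. -/
/-- For a central element `c` of `A`, scalar multiplication by `c` is an
`A`-linear endomorphism of any left `A`-module `M`. -/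
def centralSMul {A : Type*} [Ring A] (M : Type*) [AddCommGroup M] [Module A M]
    (c : A) (hc : ∀ a : A, Commute c a) : M →ₗ[A] M where
  toFun m := c • m
  map_add' := smul_add c
  map_smul' a m := by
    simp only [RingHom.id_apply, smul_smul, (hc a).eq]

/-- For a central element `h` of `A` and `k : ℕ`, the submodule
`h⁻ᵏN = {m ∈ M : hᵏ • m ∈ N}`. -/
def hPow_preimage {A : Type*} [Ring A] {M : Type*} [AddCommGroup M] [Module A M]
    (h : A) (hc : ∀ a : A, Commute h a) (k : ℕ) (N : Submodule A M) :
    Submodule A M :=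
  N.comap (centralSMul M (h ^ k) (fun a => (hc a).pow_left k))

/-- Two submodules `N₁, N₂` of a module `M` over a (not necessarily commutative)
ring `A` are fd-comparable if both `N₁/(N₁ ⊓ N₂)` and `N₂/(N₁ ⊓ N₂)` have finite
length as `A`-modules. -/
def FdComparable {A : Type*} [Ring A] {M : Type*} [AddCommGroup M] [Module A M]
    (N₁ N₂ : Submodule A M) : Prop :=
  IsFiniteLength A (N₁ ⧸ ((N₁ ⊓ N₂).comap N₁.subtype)) ∧
  IsFiniteLength A (N₂ ⧸ ((N₁ ⊓ N₂).comap N₂.subtype))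

/-- A submodule `P` containing `N` is fd-comparable with `N` iff its image in `M ⧸ N` has
finite length. -/
theorem fdComparable_iff_isFiniteLength_map_mkQ {A : Type*} [Ring A] {M : Type*}
    [AddCommGroup M] [Module A M] {N P : Submodule A M} (hNP : N ≤ P) :
    FdComparable P N ↔ IsFiniteLength A (P.map N.mkQ) := by
  have hker : (N.mkQ ∘ₗ P.subtype).ker = (P ⊓ N).comap P.subtype := by
    rw [LinearMap.ker_comp, N.ker_mkQ, inf_eq_right.2 hNP]
  have hrange : (N.mkQ ∘ₗ P.subtype).range = P.map N.mkQ := by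
    rw [LinearMap.range_comp, P.range_subtype]
  let e : (P ⧸ (P ⊓ N).comap P.subtype) ≃ₗ[A] P.map N.mkQ :=
    Submodule.quotEquivOfEq _ _ hker.symm ≪≫ₗ (N.mkQ ∘ₗ P.subtype).quotKerEquivRange ≪≫ₗ
      LinearEquiv.ofEq _ _ hrange
  have hsub : Subsingleton (N ⧸ (P ⊓ N).comap N.subtype) := by
    rw [Submodule.Quotient.subsingleton_iff, inf_eq_right.2 hNP,
      Submodule.comap_subtype_self]
  exact ⟨fun hP => e.isFiniteLength hP.1, fun hP => ⟨e.symm.isFiniteLength hP, .of_subsingleton⟩⟩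

/-- A submodule between `N` and a submodule fd-comparable with `N` is fd-comparable with `N`. -/
theorem FdComparable.of_le_of_le {A : Type*} [Ring A] {M : Type*} [AddCommGroup M] [Module A M]
    {N P Q : Submodule A M} (hP : FdComparable P N) (hNQ : N ≤ Q) (hQP : Q ≤ P) :
    FdComparable Q N := by
  rw [fdComparable_iff_isFiniteLength_map_mkQ (hNQ.trans hQP)] at hP
  rw [fdComparable_iff_isFiniteLength_map_mkQ hNQ]
  exact hP.of_injective (Submodule.inclusion_injective (Submodule.map_mono hQP))

/-- If `f` preserves `N` and `P ≥ N` is fd-comparable with `N`, then so is `f(P) + N`. -/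
theorem FdComparable.map_sup {A : Type*} [Ring A] {M : Type*} [AddCommGroup M] [Module A M]
    {N P : Submodule A M} (hP : FdComparable P N) (hNP : N ≤ P) (f : M →ₗ[A] M)
    (hf : N ≤ N.comap f) : FdComparable (P.map f ⊔ N) N := by
  rw [fdComparable_iff_isFiniteLength_map_mkQ hNP] at hP
  have hmap : (P.map f ⊔ N).map N.mkQ = (P.map N.mkQ).map (N.mapQ N f hf) := by
    rw [Submodule.map_sup, N.mkQ_map_self, sup_bot_eq, ← Submodule.map_comp,
      ← Submodule.map_comp, Submodule.mapQ_mkQ]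
  rw [fdComparable_iff_isFiniteLength_map_mkQ le_sup_right, hmap]
  exact hP.of_surjective ((N.mapQ N f hf).submoduleMap_surjective _)

theorem mem_hPow_preimage {A : Type*} [Ring A] {M : Type*} [AddCommGroup M] [Module A M]
    {h : A} {hc : ∀ a : A, Commute h a} {k : ℕ} {N : Submodule A M} {m : M} :
    m ∈ hPow_preimage h hc k N ↔ h ^ k • m ∈ N :=
  Iff.rfl

/-- If for every `k` the submodule `Nseq k` is a greatest element of the set of
submodules of `h⁻ᵏN` that are fd-comparable with `N`, then for every `i` one has
`Nⁱ ⊆ N^{i+1}`, `h·N^{i+1} ⊆ Nⁱ` and `Nⁱ = N^{i+1} ∩ h⁻ⁱN`. -/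
theorem maximal_lattices_chain {A : Type*} [Ring A] {M : Type*} [AddCommGroup M]
    [Module A M] (h : A) (hc : ∀ a : A, Commute h a) (N : Submodule A M)
    (Nseq : ℕ → Submodule A M)
    (hmax : ∀ k : ℕ, (Nseq k ≤ hPow_preimage h hc k N ∧ FdComparable (Nseq k) N) ∧
      ∀ P : Submodule A M, P ≤ hPow_preimage h hc k N → FdComparable P N →
        P ≤ Nseq k) :
    ∀ i : ℕ, Nseq i ≤ Nseq (i + 1) ∧
      (∀ m ∈ Nseq (i + 1), h • m ∈ Nseq i) ∧
      Nseq i = Nseq (i + 1) ⊓ hPow_preimage h hc i N := by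
  have hN (k : ℕ) : N ≤ Nseq k := by
    refine (hmax k).2 N (fun m hm => N.smul_mem _ hm) ?_
    rw [fdComparable_iff_isFiniteLength_map_mkQ le_rfl, N.mkQ_map_self]
    exact .of_subsingleton
  intro i
  have hle : Nseq i ≤ Nseq (i + 1) := by
    refine (hmax (i + 1)).2 _ (fun m hm => ?_) (hmax i).1.2
    rw [mem_hPow_preimage, pow_succ', mul_smul]
    exact N.smul_mem h ((hmax i).1.1 hm)
  refine ⟨hle, fun m hm => ?_, le_antisymm (le_inf hle (hmax i).1.1) ?_⟩
  · have hcomp := (hmax (i + 1)).1.2.map_sup (hN (i + 1)) (centralSMul M h hc)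
      fun m hm => N.smul_mem h hm
    refine (hmax i).2 _ (sup_le ?_ ((hN i).trans (hmax i).1.1)) hcomp
      (Submodule.mem_sup_left (Submodule.mem_map_of_mem hm))
    rintro _ ⟨x, hx, rfl⟩
    have hx' := (hmax (i + 1)).1.1 hx
    rwa [mem_hPow_preimage, pow_succ, mul_smul] at hx'
  · exact (hmax i).2 _ inf_le_right <| (hmax (i + 1)).1.2.of_le_of_le
      (le_inf (hN (i + 1)) ((hN i).trans (hmax i).1.1)) inf_le_left
end

section
/- Let i ≥ 1 and let N, P₀, P₁, P₂ be submodules of M with P₁ ⊆ P₂, such that h·P₂ ⊆ P₁, P₁ = P₂ ∩ {m ∈ M : hⁱm ∈ N}, and P₀ = P₁ ∩ {m ∈ M : h^{i-1}m ∈ N}. Then h·P₁ ⊆ P₀ and h·P₂ ∩ P₀ = h·P₁; in particular, the map hP₂/hP₁ → P₁/P₀ induced by the inclusions hP₂ ⊆ P₁ and hP₁ ⊆ P₀ is a well-defined injective module homomorphism. -/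
/-- For a central element `h` of `A`, the submodule `h·P = {h • p : p ∈ P}`. -/
def hSmul {A : Type*} [Ring A] {M : Type*} [AddCommGroup M] [Module A M]
    (h : A) (hc : ∀ a : A, Commute h a) (P : Submodule A M) : Submodule A M :=
  P.map (centralSMul M h hc)

/-- Step 2 of the proof of Proposition 3.7: if `i ≥ 1`, `P₁ ⊆ P₂`, `h·P₂ ⊆ P₁`,
`P₁ = P₂ ∩ h⁻ⁱN` and `P₀ = P₁ ∩ h^{-(i-1)}N`, then `h·P₁ ⊆ P₀` and
`h·P₂ ∩ P₀ = h·P₁`; in particular the map `hP₂/hP₁ → P₁/P₀` induced by the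
inclusions `hP₂ ⊆ P₁` and `hP₁ ⊆ P₀` is a well-defined injective homomorphism. -/
theorem step_two_embedding {A : Type*} [Ring A] {M : Type*} [AddCommGroup M]
    [Module A M] (h : A) (hc : ∀ a : A, Commute h a) (i : ℕ) (hi : 1 ≤ i)
    (N P₀ P₁ P₂ : Submodule A M) (h12 : P₁ ≤ P₂)
    (hP21 : hSmul h hc P₂ ≤ P₁)
    (hP1 : P₁ = P₂ ⊓ hPow_preimage h hc i N)
    (hP0 : P₀ = P₁ ⊓ hPow_preimage h hc (i - 1) N) :
    hSmul h hc P₁ ≤ P₀ ∧ hSmul h hc P₂ ⊓ P₀ = hSmul h hc P₁ ∧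
    ∃ φ : (↥(hSmul h hc P₂) ⧸ ((hSmul h hc P₁).comap (hSmul h hc P₂).subtype)) →ₗ[A]
        (↥P₁ ⧸ (P₀.comap P₁.subtype)),
      Function.Injective φ ∧
      ∀ (x : M) (hx₂ : x ∈ hSmul h hc P₂) (hx₁ : x ∈ P₁),
        φ (Submodule.Quotient.mk ⟨x, hx₂⟩) = Submodule.Quotient.mk ⟨x, hx₁⟩ := by
  have key (m : M) : h ^ (i - 1) • h • m = h ^ i • m := by
    rw [smul_smul, ← pow_succ, Nat.sub_add_cancel hi]
  have hP10 : hSmul h hc P₁ ≤ P₀ := by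
    rintro _ ⟨m, hm, rfl⟩
    have hmN : h ^ i • m ∈ N := (hP1.le hm).2
    refine hP0.ge ⟨hP21 ⟨m, h12 hm, rfl⟩, ?_⟩
    change h ^ (i - 1) • h • m ∈ N
    rwa [key]
  have hinf : hSmul h hc P₂ ⊓ P₀ = hSmul h hc P₁ := by
    refine le_antisymm ?_ (le_inf (Submodule.map_mono h12) hP10)
    rintro _ ⟨⟨m, hm, rfl⟩, hm₀⟩
    have hmN : h ^ (i - 1) • h • m ∈ N := (hP0.le hm₀).2
    rw [key] at hmN
    exact ⟨m, hP1.ge ⟨hm, hmN⟩, rfl⟩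
  refine ⟨hP10, hinf, Submodule.mapQ _ _ (Submodule.inclusion hP21) fun x hx => hP10 hx, ?_,
    fun x hx₂ hx₁ => rfl⟩
  rw [← LinearMap.ker_eq_bot, LinearMap.ker_eq_bot']
  intro q hq
  obtain ⟨x, rfl⟩ := Submodule.Quotient.mk_surjective _ q
  rw [Submodule.mapQ_apply, Submodule.Quotient.mk_eq_zero] at hq
  rw [Submodule.Quotient.mk_eq_zero]
  exact hinf.le ⟨x.2, hq⟩
end

section
/- Assume that the quotient module M/(h−1)M has no nonzero A-submodule that is finite-dimensional over ℂ. Then every fd-comparability class of graded lattices in M has a greatest element: in each class there is a graded lattice containing every graded lattice of that class. In particular, each fd-comparability class of graded lattices contains a unique maximal element with respect to inclusion. -/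
/-- A graded lattice in a `ℤ`-graded module `M` (with grading `ℳ`) on which a
central element `h` acts bijectively: a finitely generated graded `A`-submodule
`N` with `M = ⋃_k h⁻ᵏ N`. -/
def IsGradedLattice {A : Type*} [Ring A] [Algebra ℂ A]
    {M : Type*} [AddCommGroup M] [Module A M] [Module ℂ M] [IsScalarTower ℂ A M]
    (ℳ : ℤ → Submodule ℂ M) [DirectSum.Decomposition ℳ]
    (h : A) (N : Submodule A M) : Prop :=
  N.FG ∧
  (∀ m ∈ N, ∀ j : ℤ, ((DirectSum.decompose ℳ m j : ℳ j) : M) ∈ N) ∧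
  (∀ m : M, ∃ k : ℕ, h ^ k • m ∈ N)

/-- Two submodules `N₁, N₂` are fd-comparable if both `N₁/(N₁ ⊓ N₂)` and
`N₂/(N₁ ⊓ N₂)` are finite dimensional over `ℂ`. -/
def FdComparableC {A : Type*} [Ring A] [Algebra ℂ A]
    {M : Type*} [AddCommGroup M] [Module A M] [Module ℂ M] [IsScalarTower ℂ A M]
    (N₁ N₂ : Submodule A M) : Prop :=
  FiniteDimensional ℂ (N₁ ⧸ ((N₁ ⊓ N₂).comap N₁.subtype)) ∧
  FiniteDimensional ℂ (N₂ ⧸ ((N₁ ⊓ N₂).comap N₂.subtype))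

section FdExtension

variable {A : Type*} [Ring A] [Algebra ℂ A] {M : Type*} [AddCommGroup M] [Module A M]
  [Module ℂ M] [IsScalarTower ℂ A M]

/-- `N₁` is contained in `N₂` up to a finite-dimensional subspace. -/
def FdLE (N₁ N₂ : Submodule A M) : Prop :=
  ∃ E : Submodule ℂ M, FiniteDimensional ℂ E ∧
    N₁.restrictScalars ℂ ≤ N₂.restrictScalars ℂ ⊔ E

theorem finiteDimensional_quotient_inf_iff (N₁ N₂ : Submodule A M) :
    FiniteDimensional ℂ (N₁ ⧸ ((N₁ ⊓ N₂).comap N₁.subtype)) ↔ FdLE N₁ N₂ := by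
  constructor
  · intro hfd
    set K := (N₁ ⊓ N₂).comap N₁.subtype
    obtain ⟨E, hE⟩ := Submodule.exists_isCompl (K.restrictScalars ℂ)
    have : FiniteDimensional ℂ (N₁ ⧸ K.restrictScalars ℂ) :=
      (Submodule.Quotient.restrictScalarsEquiv ℂ K).symm.finiteDimensional
    have : FiniteDimensional ℂ E :=
      (Submodule.quotientEquivOfIsCompl _ _ hE).finiteDimensional
    refine ⟨E.map (N₁.subtype.restrictScalars ℂ), inferInstance, fun x hx => ?_⟩
    have hx' : (⟨x, hx⟩ : N₁) ∈ K.restrictScalars ℂ ⊔ E := by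
      rw [hE.sup_eq_top]; trivial
    obtain ⟨y, hy, z, hz, hyz⟩ := Submodule.mem_sup.1 hx'
    refine Submodule.mem_sup.2 ⟨y, (show (y : M) ∈ N₁ ⊓ N₂ from hy).2, z, ⟨z, hz, rfl⟩, ?_⟩
    exact congrArg Subtype.val hyz
  · rintro ⟨E, hE, hle⟩
    let g : (N₁ ⧸ ((N₁ ⊓ N₂).comap N₁.subtype)) →ₗ[A] M ⧸ N₂ :=
      Submodule.liftQ _ (N₂.mkQ ∘ₗ N₁.subtype) (fun x hx => by
        simpa using (show (x : M) ∈ N₁ ⊓ N₂ from hx).2)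
    have hg : Function.Injective g := by
      rw [← LinearMap.ker_eq_bot, eq_bot_iff]
      intro x
      obtain ⟨x, rfl⟩ := Submodule.Quotient.mk_surjective _ x
      intro hx
      have : (x : M) ∈ N₂ := (Submodule.Quotient.mk_eq_zero N₂).1 hx
      exact (Submodule.Quotient.mk_eq_zero _).2 ⟨x.2, this⟩
    have hr (x) : g.restrictScalars ℂ x ∈ E.map (N₂.mkQ.restrictScalars ℂ) := by
      obtain ⟨x, rfl⟩ := Submodule.Quotient.mk_surjective _ x
      obtain ⟨y, hy, z, hz, hyz⟩ := Submodule.mem_sup.1 (hle x.2)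
      refine ⟨z, hz, ?_⟩
      change Submodule.Quotient.mk z = (Submodule.Quotient.mk (x : M) : M ⧸ N₂)
      rw [← hyz, Submodule.Quotient.mk_add, (Submodule.Quotient.mk_eq_zero N₂).2 hy, zero_add]
    exact Module.Finite.of_injective ((g.restrictScalars ℂ).codRestrict _ hr)
      fun x y hxy => hg (congrArg Subtype.val hxy)

theorem fdComparableC_iff (N₁ N₂ : Submodule A M) :
    FdComparableC N₁ N₂ ↔ FdLE N₁ N₂ ∧ FdLE N₂ N₁ := by
  rw [← finiteDimensional_quotient_inf_iff, ← finiteDimensional_quotient_inf_iff,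
    inf_comm N₂ N₁]
  rfl

theorem FdLE.sup {N₁ N₂ N : Submodule A M} (h₁ : FdLE N₁ N) (h₂ : FdLE N₂ N) :
    FdLE (N₁ ⊔ N₂) N := by
  obtain ⟨E₁, _, h₁⟩ := h₁
  obtain ⟨E₂, _, h₂⟩ := h₂
  refine ⟨E₁ ⊔ E₂, inferInstance, fun x hx => ?_⟩
  obtain ⟨y, hy, z, hz, rfl⟩ := Submodule.mem_sup.1 (show x ∈ N₁ ⊔ N₂ from hx)
  have hle₁ : N.restrictScalars ℂ ⊔ E₁ ≤ N.restrictScalars ℂ ⊔ (E₁ ⊔ E₂) :=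
    sup_le_sup_left le_sup_left _
  have hle₂ : N.restrictScalars ℂ ⊔ E₂ ≤ N.restrictScalars ℂ ⊔ (E₁ ⊔ E₂) :=
    sup_le_sup_left le_sup_right _
  exact add_mem (hle₁ (h₁ hy)) (hle₂ (h₂ hz))

theorem FdLE.mono_right {N N₁ N₂ : Submodule A M} (h₁ : FdLE N N₁) (h₂ : N₁ ≤ N₂) :
    FdLE N N₂ := by
  obtain ⟨E, hE, h₁⟩ := h₁
  exact ⟨E, hE, h₁.trans (sup_le_sup_right (fun _ hx => h₂ hx) _)⟩

theorem FdLE.refl (N : Submodule A M) : FdLE N N :=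
  ⟨⊥, inferInstance, le_sup_left⟩

omit [Algebra ℂ A] [Module ℂ M] [IsScalarTower ℂ A M] in
/-- A submodule that an injective central scalar maps into a finitely generated submodule is
finitely generated. -/
theorem fg_of_central_smul_mem [IsNoetherianRing A] {N P : Submodule A M} (hN : N.FG) (c : A)
    (hc : ∀ a : A, Commute c a) (hinj : Function.Injective fun m : M => c • m)
    (hP : ∀ m ∈ P, c • m ∈ N) : P.FG := by
  have := isNoetherian_of_fg_of_noetherian N hN
  refine Submodule.fg_of_fg_map_injective (centralSMul M c hc) hinj ?_
  have hle : P.map (centralSMul M c hc) ≤ N := by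
    rintro _ ⟨m, hm, rfl⟩
    exact hP m hm
  have h := (IsNoetherian.noetherian ((P.map (centralSMul M c hc)).comap N.subtype)).map N.subtype
  rwa [Submodule.map_comap_subtype, inf_eq_right.2 hle] at h

end FdExtension

section Grading

variable {M : Type*} [AddCommGroup M] [Module ℂ M] (ℳ : ℤ → Submodule ℂ M)
  [DirectSum.Decomposition ℳ]

/-- The projection of a graded module onto its component of degree `j`. -/
def gradedProj (j : ℤ) : M →ₗ[ℂ] M where
  toFun m := (DirectSum.decompose ℳ m j : ℳ j)
  map_add' x y := by simp
  map_smul' c x := by rw [DirectSum.decompose_smul]; rfl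

theorem gradedProj_mem (j : ℤ) (m : M) : gradedProj ℳ j m ∈ ℳ j :=
  (DirectSum.decompose ℳ m j).2

variable {ℳ} in
theorem gradedProj_same {j : ℤ} {m : M} (hm : m ∈ ℳ j) : gradedProj ℳ j m = m :=
  DirectSum.decompose_of_mem_same ℳ hm

variable {ℳ} in
theorem gradedProj_ne {i j : ℤ} {m : M} (hm : m ∈ ℳ i) (hij : i ≠ j) :
    gradedProj ℳ j m = 0 :=
  DirectSum.decompose_of_mem_ne ℳ hm hij

theorem exists_abs_bound_gradedProj (m : M) :
    ∃ C : ℤ, ∀ j, C < |j| → gradedProj ℳ j m = 0 := by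
  induction m using DirectSum.Decomposition.inductionOn ℳ with
  | zero => exact ⟨0, by simp⟩
  | @homogeneous i m => exact ⟨|i|, fun j hj => gradedProj_ne m.2 (by rintro rfl; omega)⟩
  | add x y hx hy =>
    obtain ⟨C₁, h₁⟩ := hx
    obtain ⟨C₂, h₂⟩ := hy
    refine ⟨max C₁ C₂, fun j hj => ?_⟩
    rw [map_add, h₁ j (by omega), h₂ j (by omega), add_zero]

theorem exists_abs_bound_gradedProj_of_finite (s : Set M) (hs : s.Finite) :
    ∃ C : ℤ, ∀ m ∈ s, ∀ j, C < |j| → gradedProj ℳ j m = 0 := by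
  choose f hf using exists_abs_bound_gradedProj ℳ
  obtain ⟨C, hC⟩ := (hs.image f).bddAbove
  exact ⟨C, fun m hm j hj => hf m j ((hC ⟨m, hm, rfl⟩).trans_lt hj)⟩

theorem exists_abs_bound_gradedProj_of_finiteDimensional (E : Submodule ℂ M)
    [FiniteDimensional ℂ E] :
    ∃ C : ℤ, ∀ m ∈ E, ∀ j, C < |j| → gradedProj ℳ j m = 0 := by
  obtain ⟨s, rfl⟩ : E.FG := Module.Finite.iff_fg.1 inferInstance
  obtain ⟨C, hC⟩ := exists_abs_bound_gradedProj_of_finite ℳ s s.finite_toSet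
  refine ⟨C, fun m hm j hj => ?_⟩
  have hle : Submodule.span ℂ (s : Set M) ≤ LinearMap.ker (gradedProj ℳ j) :=
    Submodule.span_le.2 fun x hx => hC x hx j hj
  exact hle hm

theorem mem_of_gradedProj_mem {S : AddSubgroup M} {m : M} (hm : ∀ j, gradedProj ℳ j m ∈ S) :
    m ∈ S := by
  classical
  rw [← DirectSum.sum_support_decompose ℳ m]
  exact S.sum_mem fun j _ => hm j

end Grading

section GradedAction

variable {A : Type*} [Ring A] [Algebra ℂ A] (𝒜 : ℕ → Submodule ℂ A)
  {M : Type*} [AddCommGroup M] [Module A M] [Module ℂ M]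
  (ℳ : ℤ → Submodule ℂ M) [DirectSum.Decomposition ℳ]

variable {𝒜 ℳ}

/-- A finitely generated module over an `ℕ`-graded ring is bounded below. -/
theorem exists_lower_bound_of_fg [GradedRing 𝒜]
    (hcompat : ∀ (i : ℕ) (j : ℤ), ∀ a ∈ 𝒜 i, ∀ m ∈ ℳ j, a • m ∈ ℳ ((i : ℤ) + j))
    {N : Submodule A M} (hN : N.FG) :
    ∃ c : ℤ, ∀ m ∈ N, ∀ j < c, gradedProj ℳ j m = 0 := by
  obtain ⟨s, rfl⟩ := hN
  obtain ⟨C, hC⟩ := exists_abs_bound_gradedProj_of_finite ℳ s s.finite_toSet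
  have key (a : A) (m : M) (hm : ∀ j < -|C|, gradedProj ℳ j m = 0) :
      ∀ j < -|C|, gradedProj ℳ j (a • m) = 0 := by
    classical
    intro j hj
    induction a using DirectSum.Decomposition.inductionOn 𝒜 with
    | zero => simp
    | @homogeneous i a =>
      rw [← DirectSum.sum_support_decompose ℳ m, Finset.smul_sum, map_sum]
      refine Finset.sum_eq_zero fun k _ => ?_
      by_cases hk : k < -|C|
      · have : ((DirectSum.decompose ℳ m k : ℳ k) : M) = 0 := hm k hk
        rw [this, smul_zero, map_zero]
      · exact gradedProj_ne (hcompat i k a a.2 _ (DirectSum.decompose ℳ m k).2) (by omega)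
    | add x y hx hy => rw [add_smul, map_add, hx, hy, add_zero]
  refine ⟨-|C|, fun m hm => ?_⟩
  induction hm using Submodule.span_induction with
  | mem x hx =>
    intro j hj
    refine hC x hx j ?_
    have := le_abs_self C
    have := neg_le_abs j
    omega
  | zero => simp
  | add x y _ _ hx hy => intro j hj; rw [map_add, hx j hj, hy j hj, add_zero]
  | smul a x _ hx => exact key a x hx

variable {d : ℕ} {h : A} (hh : ∀ j : ℤ, ∀ m ∈ ℳ j, h • m ∈ ℳ (d + j))
include hh

omit [Algebra ℂ A] [DirectSum.Decomposition ℳ] in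
theorem pow_smul_mem_graded (k : ℕ) {j : ℤ} {m : M} (hm : m ∈ ℳ j) :
    h ^ k • m ∈ ℳ (k * d + j) := by
  induction k with
  | zero => simpa using hm
  | succ k ih =>
    rw [pow_succ', mul_smul]
    convert hh _ _ ih using 2
    push_cast
    ring

omit [Algebra ℂ A] in
theorem gradedProj_smul (j : ℤ) (m : M) :
    gradedProj ℳ (d + j) (h • m) = h • gradedProj ℳ j m := by
  induction m using DirectSum.Decomposition.inductionOn ℳ with
  | zero => simp
  | @homogeneous i m =>
    by_cases hij : i = j
    · subst hij
      rw [gradedProj_same m.2, gradedProj_same (hh _ _ m.2)]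
    · rw [gradedProj_ne m.2 hij, gradedProj_ne (hh _ _ m.2) (by omega), smul_zero]
  | add x y hx hy => rw [smul_add, map_add, map_add, hx, hy, smul_add]

omit [Algebra ℂ A] in
theorem eq_zero_of_eq_sub_one_smul (hd : 0 < d)
    (hinj : Function.Injective fun m : M => h • m) {j : ℤ} {m y : M} (hm : m ∈ ℳ j)
    (hy : (h - 1) • y = m) : m = 0 := by
  have step (i : ℤ) : h • gradedProj ℳ i y - gradedProj ℳ (d + i) y = gradedProj ℳ (d + i) m := by
    rw [← hy, sub_smul, one_smul, map_sub, gradedProj_smul hh]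
  obtain ⟨C, hC⟩ := exists_abs_bound_gradedProj ℳ y
  have hup (n : ℕ) : ∀ i : ℤ, j ≤ i → C < i + n → gradedProj ℳ i y = 0 := by
    induction n with
    | zero => exact fun i _ hi => hC i (by have := le_abs_self i; omega)
    | succ n ih =>
      intro i hji hi
      have hs := step i
      rw [ih (d + i) (by omega) (by omega), gradedProj_ne hm (by omega), sub_zero] at hs
      exact hinj (hs.trans (smul_zero h).symm)
  have hdown (n : ℕ) : ∀ i : ℤ, i < j → i - n < -C → gradedProj ℳ i y = 0 := by
    induction n with
    | zero => exact fun i _ hi => hC i (by have := neg_le_abs i; omega)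
    | succ n ih =>
      intro i hij hi
      have hs := step (i - d)
      rw [ih (i - d) (by omega) (by omega), gradedProj_ne hm (by omega), smul_zero, zero_sub,
        neg_eq_zero, add_sub_cancel] at hs
      exact hs
  have hs := step (j - d)
  rwa [hdown (C + j).natAbs.succ (j - d) (by omega) (by omega), add_sub_cancel,
    hup (C - j).natAbs.succ j le_rfl (by omega), gradedProj_same hm, smul_zero, sub_zero,
    eq_comm] at hs

end GradedAction

section Main

variable {A : Type*} [Ring A] [Algebra ℂ A] {𝒜 : ℕ → Submodule ℂ A} [GradedRing 𝒜]
  {M : Type*} [AddCommGroup M] [Module A M] [Module ℂ M] [IsScalarTower ℂ A M]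
  {ℳ : ℤ → Submodule ℂ M} [DirectSum.Decomposition ℳ]

/-- If `M/(h-1)M` has no nonzero finite-dimensional submodule, then a graded submodule of `M` whose
components of low degree are finite dimensional is bounded below. -/
theorem exists_lower_bound_of_no_finiteDimensional_submodule
    {d : ℕ} (hd : 0 < d) {h : A} (hhd : h ∈ 𝒜 d) (hc : ∀ a : A, Commute h a)
    (hcompat : ∀ (i : ℕ) (j : ℤ), ∀ a ∈ 𝒜 i, ∀ m ∈ ℳ j, a • m ∈ ℳ ((i : ℤ) + j))
    (hinj : Function.Injective (fun m : M => h • m))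
    (hnofd : ∀ P : Submodule A
        (M ⧸ LinearMap.range (centralSMul M (h - 1)
          (fun a => (hc a).sub_left (Commute.one_left a)))),
      FiniteDimensional ℂ P → P = ⊥)
    (S : Submodule A M) (c : ℤ)
    (hfin : ∀ j < c, FiniteDimensional ℂ ↥(S.restrictScalars ℂ ⊓ ℳ j)) :
    ∃ b : ℤ, ∀ j ≤ b, ∀ m ∈ S, m ∈ ℳ j → m = 0 := by
  have hh (j : ℤ) (m : M) (hm : m ∈ ℳ j) : h • m ∈ ℳ (d + j) := hcompat d j h hhd m hm
  set R := LinearMap.range (centralSMul M (h - 1)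
    (fun a => (hc a).sub_left (Commute.one_left a)))
  let q : M →ₗ[ℂ] M ⧸ R := R.mkQ.restrictScalars ℂ
  have hq (m : M) : q (h • m) = q m :=
    (Submodule.Quotient.eq R).2 ⟨m, by simp [centralSMul, sub_smul]⟩
  have hqpow (k : ℕ) (m : M) : q (h ^ k • m) = q m := by
    induction k with
    | zero => simp
    | succ k ih => rw [pow_succ', mul_smul, hq, ih]
  let W (b : ℤ) : Submodule ℂ (M ⧸ R) :=
    Submodule.span ℂ (q '' {m | m ∈ S ∧ ∃ j ≤ b, m ∈ ℳ j})
  have hWmono {b b' : ℤ} (hb : b ≤ b') : W b ≤ W b' :=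
    Submodule.span_mono (Set.image_mono fun m hm =>
      ⟨hm.1, hm.2.imp fun j hj => ⟨hj.1.trans hb, hj.2⟩⟩)
  have hWfin (b : ℤ) (hb : b < c) : FiniteDimensional ℂ (W b) := by
    have (j : Finset.Ioc (b - d) b) : FiniteDimensional ℂ ↥(S.restrictScalars ℂ ⊓ ℳ j) :=
      hfin j ((Finset.mem_Ioc.1 j.2).2.trans_lt hb)
    have hle : W b ≤ ⨆ j : Finset.Ioc (b - d) b, (S.restrictScalars ℂ ⊓ ℳ j).map q := by
      refine Submodule.span_le.2 ?_
      rintro _ ⟨m, ⟨hmS, j, hjb, hmj⟩, rfl⟩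
      have hd' : (0 : ℤ) < d := by exact_mod_cast hd
      obtain ⟨k, hk⟩ := Int.eq_ofNat_of_zero_le
        (Int.ediv_nonneg (sub_nonneg.2 hjb) hd'.le)
      have h₁ := Int.mul_ediv_add_emod (b - j) d
      have h₂ := Int.emod_nonneg (b - j) hd'.ne'
      have h₃ := Int.emod_lt_of_pos (b - j) hd'
      rw [hk, mul_comm] at h₁
      have hmem : (k * d + j : ℤ) ∈ Finset.Ioc (b - d) b :=
        Finset.mem_Ioc.2 ⟨by linarith, by linarith⟩
      rw [← hqpow k m]
      exact Submodule.mem_iSup_of_mem (⟨_, hmem⟩ : Finset.Ioc (b - d) b)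
        ⟨_, ⟨S.smul_mem _ hmS, pow_smul_mem_graded hh k hmj⟩, rfl⟩
    exact Submodule.finiteDimensional_of_le hle
  obtain ⟨n, hn⟩ : ∃ n : ℕ, ∀ n' : ℕ,
      Module.finrank ℂ (W (c - 1 - n)) ≤ Module.finrank ℂ (W (c - 1 - n')) :=
    ⟨Function.argmin fun n : ℕ => Module.finrank ℂ (W (c - 1 - n)),
      fun n' => Function.argmin_le (fun n : ℕ => Module.finrank ℂ (W (c - 1 - n))) n'⟩
  set b := c - 1 - n with hb
  have hWstab (i : ℕ) : W (b - i) = W b := by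
    have := hWfin b (by omega)
    refine Submodule.eq_of_le_of_finrank_le (hWmono (by omega)) ?_
    have := hn (n + i)
    rwa [show c - 1 - ((n + i : ℕ) : ℤ) = b - i by push_cast; omega] at this
  have hsmul (a : A) (x : M ⧸ R) (hx : x ∈ W b) : a • x ∈ W b := by
    induction a using DirectSum.Decomposition.inductionOn 𝒜 with
    | zero => simp
    | add a a' ha ha' => rw [add_smul]; exact add_mem ha ha'
    | @homogeneous i a =>
      rw [← hWstab i] at hx
      induction hx using Submodule.span_induction with
      | zero => simp
      | add x y _ _ hx hy => rw [smul_add]; exact add_mem hx hy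
      | smul t x _ hx =>
        rw [← algebraMap_smul A t x, smul_smul, ← Algebra.commutes, mul_smul, algebraMap_smul]
        exact Submodule.smul_mem _ t hx
      | mem x hx =>
        obtain ⟨m, ⟨hmS, j, hj, hmj⟩, rfl⟩ := hx
        exact Submodule.subset_span ⟨(a : A) • m,
          ⟨S.smul_mem _ hmS, i + j, by omega, hcompat i j a a.2 m hmj⟩, rfl⟩
  let P : Submodule A (M ⧸ R) :=
    { (W b).toAddSubmonoid with smul_mem' := fun a x hx => hsmul a x hx }
  have hP : P = ⊥ := hnofd P (hWfin b (by omega))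
  refine ⟨b, fun j hj m hmS hmj => ?_⟩
  have hqm : q m ∈ P := Submodule.subset_span ⟨m, ⟨hmS, j, hj, hmj⟩, rfl⟩
  rw [hP, Submodule.mem_bot] at hqm
  obtain ⟨y, hy⟩ := (Submodule.Quotient.mk_eq_zero R).1 hqm
  exact eq_zero_of_eq_sub_one_smul hh hd hinj hmj hy

theorem IsGradedLattice.sup [IsNoetherianRing A] {h : A} {N₁ N₂ : Submodule A M}
    (h₁ : IsGradedLattice ℳ h N₁) (h₂ : IsGradedLattice ℳ h N₂) :
    IsGradedLattice ℳ h (N₁ ⊔ N₂) := by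
  refine ⟨h₁.1.sup h₂.1, fun m hm j => ?_, fun m => ?_⟩
  · obtain ⟨x, hx, y, hy, rfl⟩ := Submodule.mem_sup.1 hm
    rw [DirectSum.decompose_add, DirectSum.add_apply]
    exact Submodule.add_mem_sup (h₁.2.1 x hx j) (h₂.2.1 y hy j)
  · obtain ⟨k, hk⟩ := h₁.2.2 m
    exact ⟨k, (le_sup_left : N₁ ≤ N₁ ⊔ N₂) hk⟩

end Main

/-- Proposition 3.7: let `A` be a left Noetherian `ℕ`-graded `ℂ`-algebra,
`h ∈ A_d` central of degree `d > 0`, and `M` a compatibly `ℤ`-graded `A`-module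
on which `h` acts bijectively. If `M/(h-1)M` has no nonzero finite-dimensional
`A`-submodule, then every fd-comparability class of graded lattices in `M` has
a greatest element. -/
theorem greatest_lattice_in_fd_class
    {A : Type*} [Ring A] [Algebra ℂ A] (𝒜 : ℕ → Submodule ℂ A) [GradedRing 𝒜]
    [IsNoetherianRing A]
    (d : ℕ) (hd : 0 < d) (h : A) (hhd : h ∈ 𝒜 d) (hc : ∀ a : A, Commute h a)
    {M : Type*} [AddCommGroup M] [Module A M] [Module ℂ M] [IsScalarTower ℂ A M]
    (ℳ : ℤ → Submodule ℂ M) [DirectSum.Decomposition ℳ]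
    (hcompat : ∀ (i : ℕ) (j : ℤ), ∀ a ∈ 𝒜 i, ∀ m ∈ ℳ j, a • m ∈ ℳ ((i : ℤ) + j))
    (hbij : Function.Bijective (fun m : M => h • m))
    (hnofd : ∀ P : Submodule A
        (M ⧸ LinearMap.range (centralSMul M (h - 1)
          (fun a => (hc a).sub_left (Commute.one_left a)))),
      FiniteDimensional ℂ P → P = ⊥) :
    ∀ N : Submodule A M, IsGradedLattice ℳ h N →
      ∃ N₀ : Submodule A M, IsGradedLattice ℳ h N₀ ∧ FdComparableC N₀ N ∧
        ∀ N' : Submodule A M, IsGradedLattice ℳ h N' → FdComparableC N' N →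
          N' ≤ N₀ := by
  intro N hN
  have hh (j : ℤ) (m : M) (hm : m ∈ ℳ j) : h • m ∈ ℳ (d + j) := hcompat d j h hhd m hm
  let T : Set (Submodule A M) := {N' | IsGradedLattice ℳ h N' ∧ FdComparableC N' N}
  have hNT : N ∈ T := ⟨hN, (fdComparableC_iff N N).2 ⟨.refl N, .refl N⟩⟩
  have hdir : DirectedOn (· ≤ ·) T := by
    rintro N₁ ⟨h₁, h₁'⟩ N₂ ⟨h₂, h₂'⟩
    rw [fdComparableC_iff] at h₁' h₂'
    exact ⟨N₁ ⊔ N₂, ⟨h₁.sup h₂, (fdComparableC_iff _ _).2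
      ⟨h₁'.1.sup h₂'.1, h₁'.2.mono_right le_sup_left⟩⟩, le_sup_left, le_sup_right⟩
  let S := sSup T
  have hmemS {m : M} : m ∈ S ↔ ∃ N' ∈ T, m ∈ N' :=
    Submodule.mem_sSup_of_directed ⟨N, hNT⟩ hdir
  have hbdd (P : Submodule A M) (hP : P.FG) (hPS : P ≤ S) : ∃ N' ∈ T, P ≤ N' :=
    (CompleteLattice.isCompactElement_iff_le_of_directed_sSup_le _ P).1
      ((Submodule.fg_iff_compact P).1 hP) T ⟨N, hNT⟩ hdir hPS
  suffices hSfg : S.FG by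
    obtain ⟨N₀, hN₀, hle⟩ := hbdd S hSfg le_rfl
    exact ⟨N₀, hN₀.1, hN₀.2, fun N' h₁ h₂ => (le_sSup (show N' ∈ T from ⟨h₁, h₂⟩)).trans hle⟩
  have hcpow (k : ℕ) (a : A) : Commute (h ^ k) a := (hc a).pow_left k
  have hinjpow (k : ℕ) : Function.Injective fun m : M => h ^ k • m := by
    simpa only [smul_iterate] using hbij.injective.iterate k
  have hfinite (k : ℕ) : ∃ E : Submodule ℂ M, FiniteDimensional ℂ E ∧
      ∀ m ∈ S, h ^ k • m ∈ N → m ∈ N.restrictScalars ℂ ⊔ E := by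
    let P := S ⊓ N.comap (centralSMul M (h ^ k) (hcpow k))
    obtain ⟨N', hN', hle⟩ := hbdd P
      (fg_of_central_smul_mem hN.1 (h ^ k) (hcpow k) (hinjpow k) fun m hm => hm.2) inf_le_left
    obtain ⟨E, hE, hE'⟩ := ((fdComparableC_iff _ _).1 hN'.2).1
    exact ⟨E, hE, fun m hm hmN => hE' (hle ⟨hm, hmN⟩)⟩
  have hNproj (m : M) (hm : m ∈ N) (j : ℤ) : gradedProj ℳ j m ∈ N := hN.2.1 m hm j
  have hSproj (m : M) (hm : m ∈ S) (j : ℤ) : gradedProj ℳ j m ∈ S := by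
    obtain ⟨N', hN', hmN'⟩ := hmemS.1 hm
    exact hmemS.2 ⟨N', hN', hN'.1.2.1 m hmN' j⟩
  obtain ⟨C, hC⟩ : ∃ C : ℤ, ∀ j > C, ∀ m ∈ S, m ∈ ℳ j → m ∈ N := by
    obtain ⟨E, hE, hE'⟩ := hfinite 1
    obtain ⟨C, hC⟩ := exists_abs_bound_gradedProj_of_finiteDimensional ℳ E
    have hone (j : ℤ) (hj : C < j) (m : M) (hmS : m ∈ S) (hmj : m ∈ ℳ j) (hm : h • m ∈ N) :
        m ∈ N := by
      obtain ⟨x, hx, e, he, hxe⟩ := Submodule.mem_sup.1 (hE' m hmS (by rwa [pow_one]))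
      have hm' := gradedProj_same hmj
      rw [← hxe, map_add, hC e he j (hj.trans_le (le_abs_self j)), add_zero, hxe] at hm'
      exact hm' ▸ hNproj x hx j
    have hpow (k : ℕ) : ∀ j > C, ∀ m ∈ S, m ∈ ℳ j → h ^ k • m ∈ N → m ∈ N := by
      induction k with
      | zero => intro j _ m _ _ hm; simpa using hm
      | succ k ih =>
        intro j hj m hmS hmj hm
        rw [pow_succ, mul_smul] at hm
        exact hone j hj m hmS hmj
          (ih (d + j) (by omega) _ (S.smul_mem h hmS) (hh j m hmj) hm)
    exact ⟨C, fun j hj m hmS hmj => (hN.2.2 m).elim fun k hk => hpow k j hj m hmS hmj hk⟩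
  have hpowN {b : ℤ} {k : ℕ} (hk : C < k + b) (j : ℤ) (hj : b ≤ j) (m : M) (hmS : m ∈ S)
      (hmj : m ∈ ℳ j) : h ^ k • m ∈ N := by
    refine hC _ ?_ _ (S.smul_mem _ hmS) (pow_smul_mem_graded hh k hmj)
    have : (k : ℤ) ≤ k * d := le_mul_of_one_le_right (by positivity) (by exact_mod_cast hd)
    omega
  obtain ⟨c, hcN⟩ := exists_lower_bound_of_fg hcompat hN.1
  have hSfin (j : ℤ) (hj : j < c) : FiniteDimensional ℂ ↥(S.restrictScalars ℂ ⊓ ℳ j) := by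
    obtain ⟨E, hE, hE'⟩ := hfinite (C - j).natAbs.succ
    have hle : S.restrictScalars ℂ ⊓ ℳ j ≤ E.map (gradedProj ℳ j) := by
      rintro m ⟨hmS, hmj⟩
      obtain ⟨x, hx, e, he, hxe⟩ := Submodule.mem_sup.1
        (hE' m hmS (hpowN (by omega) j le_rfl m hmS hmj))
      refine ⟨e, he, ?_⟩
      rw [← gradedProj_same hmj, ← hxe, map_add, hcN x hx j hj, zero_add]
    exact Submodule.finiteDimensional_of_le hle
  obtain ⟨b, hb⟩ := exists_lower_bound_of_no_finiteDimensional_submodule hd hhd hc hcompat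
    hbij.injective hnofd S c hSfin
  refine fg_of_central_smul_mem hN.1 (h ^ (C - b).natAbs.succ) (hcpow _) (hinjpow _) fun m hm => ?_
  refine mem_of_gradedProj_mem ℳ (S := (N.comap
    (centralSMul M (h ^ (C - b).natAbs.succ) (hcpow _))).toAddSubgroup) fun j => ?_
  change h ^ (C - b).natAbs.succ • gradedProj ℳ j m ∈ N
  obtain hj | hj := le_total b j
  · exact hpowN (by omega) j hj _ (hSproj m hm j) (gradedProj_mem ℳ j m)
  · rw [hb j hj _ (hSproj m hm j) (gradedProj_mem ℳ j m), smul_zero]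
    exact N.zero_mem
end

section
/- Let N be a lattice in M and let n := dim Supp(N/hN). Then the following are equivalent: (1) N is maximal in its comparability class, i.e., there is no lattice N' with N ⊊ N' such that dim Supp(N'/(N ∩ N')) < n and dim Supp(N/(N ∩ N')) < n; (2) every nonzero R-submodule of N/hN has support of Krull dimension equal to n. -/
/-- The Krull dimension of the support of a module, with `⊥` (i.e. `-∞`)
for the zero module. -/
noncomputable def dimSupp (R : Type*) [CommRing R] (P : Type*) [AddCommGroup P]
    [Module R P] : WithBot (WithTop ℕ) :=
  Order.krullDim (Module.support R P)

/-- A lattice in a module `M` on which `h` acts bijectively: a finitely generated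
submodule `N` with `M = ⋃_k h⁻ᵏN`. -/
def IsLattice {R : Type*} [CommRing R] {M : Type*} [AddCommGroup M] [Module R M]
    (h : R) (N : Submodule R M) : Prop :=
  N.FG ∧ ∀ m : M, ∃ k : ℕ, h ^ k • m ∈ N

/-- The submodule `hN ⊆ N`, viewed as a submodule of `N`. -/
def hInside {R : Type*} [CommRing R] {M : Type*} [AddCommGroup M] [Module R M]
    (h : R) (N : Submodule R M) : Submodule R N :=
  (N.map (LinearMap.lsmul R M h)).comap N.subtype

theorem dimSupp_le_of_injective {R P Q : Type*} [CommRing R] [AddCommGroup P] [Module R P]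
    [AddCommGroup Q] [Module R Q] (f : P →ₗ[R] Q) (hf : Function.Injective f) :
    dimSupp R P ≤ dimSupp R Q :=
  Order.krullDim_le_of_strictMono
    (Set.inclusion (Module.support_subset_of_injective f hf)) fun _ _ hab => hab

theorem dimSupp_congr {R P Q : Type*} [CommRing R] [AddCommGroup P] [Module R P]
    [AddCommGroup Q] [Module R Q] (e : P ≃ₗ[R] Q) : dimSupp R P = dimSupp R Q :=
  le_antisymm (dimSupp_le_of_injective e.toLinearMap e.injective)
    (dimSupp_le_of_injective e.symm.toLinearMap e.symm.injective)

theorem dimSupp_eq_bot (R P : Type*) [CommRing R] [AddCommGroup P] [Module R P]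
    [Subsingleton P] : dimSupp R P = ⊥ := by
  have : IsEmpty (Module.support R P) :=
    Set.isEmpty_coe_sort.2 (Module.support_eq_empty_iff.2 inferInstance)
  exact Order.krullDim_eq_bot

section

variable {R M : Type*} [CommRing R] [AddCommGroup M] [Module R M] {h : R} {N L : Submodule R M}

/-- Multiplication by `h` as a map `L → N / hN`, when `hL ⊆ N`. -/
def smulToQuotient (hL : ∀ x ∈ L, h • x ∈ N) : L →ₗ[R] N ⧸ hInside h N :=
  (hInside h N).mkQ ∘ₗ (LinearMap.lsmul R M h).restrict hL

theorem smulToQuotient_apply (hL : ∀ x ∈ L, h • x ∈ N) (x : L) :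
    smulToQuotient hL x = (hInside h N).mkQ ⟨h • (x : M), hL x x.2⟩ := rfl

theorem ker_smulToQuotient (hinj : Function.Injective (fun m : M => h • m))
    (hL : ∀ x ∈ L, h • x ∈ N) :
    LinearMap.ker (smulToQuotient hL) = (N ⊓ L).comap L.subtype := by
  ext x
  rw [LinearMap.mem_ker, smulToQuotient_apply, Submodule.mkQ_apply,
    Submodule.Quotient.mk_eq_zero]
  constructor
  · rintro ⟨y, hy, hyx⟩
    obtain rfl : y = x := hinj hyx
    exact ⟨hy, x.2⟩
  · exact fun hx => ⟨x, hx.1, rfl⟩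

theorem dimSupp_range_smulToQuotient (hinj : Function.Injective (fun m : M => h • m))
    (hL : ∀ x ∈ L, h • x ∈ N) :
    dimSupp R (LinearMap.range (smulToQuotient hL)) =
      dimSupp R (L ⧸ (N ⊓ L).comap L.subtype) := by
  rw [← ker_smulToQuotient hinj hL]
  exact (dimSupp_congr (smulToQuotient hL).quotKerEquivRange).symm

theorem dimSupp_quotient_mono {L' : Submodule R M} (hLL' : L ≤ L') :
    dimSupp R (L ⧸ (N ⊓ L).comap L.subtype) ≤ dimSupp R (L' ⧸ (N ⊓ L').comap L'.subtype) := by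
  refine dimSupp_le_of_injective
    (Submodule.mapQ _ _ (Submodule.inclusion hLL') fun x hx =>
      Submodule.mem_comap.2 ⟨(Submodule.mem_comap.1 hx).1, hLL' x.2⟩) ?_
  rw [← LinearMap.ker_eq_bot, Submodule.ker_mapQ, ← le_bot_iff, Submodule.map_le_iff_le_comap,
    Submodule.comap_bot, Submodule.ker_mkQ]
  exact fun x hx => ⟨hx.1, x.2⟩

/-- A submodule properly containing a lattice contains an element outside the lattice
that `h` multiplies into the lattice. -/
theorem IsLattice.exists_smul_mem (hN : IsLattice h N) (hNL : N < L) :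
    ∃ x ∈ L, x ∉ N ∧ h • x ∈ N := by
  classical
  obtain ⟨m, hmL, hmN⟩ := SetLike.exists_of_lt hNL
  have hpos : Nat.find (hN.2 m) ≠ 0 := fun h0 => hmN <| by
    simpa [h0] using Nat.find_spec (hN.2 m)
  obtain ⟨k, hk⟩ := Nat.exists_eq_succ_of_ne_zero hpos
  refine ⟨h ^ k • m, L.smul_mem _ hmL, Nat.find_min (hN.2 m) (by omega), ?_⟩
  rw [smul_smul, ← pow_succ', ← Nat.succ_eq_add_one, ← hk]
  exact Nat.find_spec (hN.2 m)

theorem IsLattice.of_smul_mem [IsNoetherianRing R]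
    (hinj : Function.Injective (fun m : M => h • m)) (hN : IsLattice h N) (hNL : N ≤ L)
    (hL : ∀ x ∈ L, h • x ∈ N) : IsLattice h L := by
  refine ⟨?_, fun m => (hN.2 m).imp fun k hk => hNL hk⟩
  refine Submodule.fg_of_fg_map_injective (LinearMap.lsmul R M h) hinj ?_
  exact hN.1.of_le (Submodule.map_le_iff_le_comap.2 hL)

end

/-- Theorem 3.3, equivalence (1) ⟺ (2): a lattice `N` in `M` (where
`n := dim Supp N/hN`) is maximal in its comparability class iff every nonzero
submodule of `N/hN` has support of Krull dimension `n`. -/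
theorem maximal_lattice_iff_no_small_submodule
    {R : Type*} [CommRing R] [IsNoetherianRing R]
    {M : Type*} [AddCommGroup M] [Module R M]
    (h : R) (hbij : Function.Bijective (fun m : M => h • m))
    (N : Submodule R M) (hN : IsLattice h N)
    (n : WithBot (WithTop ℕ)) (hn : n = dimSupp R (N ⧸ hInside h N)) :
    (¬ ∃ N' : Submodule R M, IsLattice h N' ∧ N < N' ∧
        dimSupp R (N' ⧸ ((N ⊓ N').comap N'.subtype)) < n ∧
        dimSupp R (N ⧸ ((N ⊓ N').comap N.subtype)) < n) ↔
    (∀ P : Submodule R (N ⧸ hInside h N), P ≠ ⊥ → dimSupp R P = n) := by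
  constructor
  · intro hmax P hP
    by_contra hne
    have hlt : dimSupp R P < n :=
      lt_of_le_of_ne (hn ▸ dimSupp_le_of_injective P.subtype P.subtype_injective) hne
    let L := ((P.comap (hInside h N).mkQ).map N.subtype).comap (LinearMap.lsmul R M h)
    have hL : ∀ x ∈ L, h • x ∈ N := by
      rintro x ⟨y, -, hyx⟩
      exact (show (y : M) = h • x from hyx) ▸ y.2
    have hNL : N ≤ L := by
      intro x hx
      refine ⟨⟨h • x, N.smul_mem h hx⟩, ?_, rfl⟩
      have : (hInside h N).mkQ ⟨h • x, N.smul_mem h hx⟩ = 0 :=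
        (Submodule.Quotient.mk_eq_zero _).2 ⟨x, hx, rfl⟩
      exact Submodule.mem_comap.2 (this ▸ P.zero_mem)
    have hrange : LinearMap.range (smulToQuotient hL) = P := by
      ext p
      constructor
      · rintro ⟨⟨x, y, hy, hyx⟩, rfl⟩
        rw [smulToQuotient_apply]
        have hxy : y = ⟨h • x, hL x ⟨y, hy, hyx⟩⟩ := Subtype.ext hyx
        exact hxy ▸ hy
      · intro hp
        obtain ⟨y, rfl⟩ := (hInside h N).mkQ_surjective p
        obtain ⟨x, hx⟩ := hbij.2 (y : M)
        exact ⟨⟨x, y, hp, hx.symm⟩, congrArg (hInside h N).mkQ (Subtype.ext hx)⟩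
    have hdim : dimSupp R (L ⧸ (N ⊓ L).comap L.subtype) = dimSupp R P := by
      rw [← dimSupp_range_smulToQuotient hbij.1 hL, hrange]
    refine hmax ⟨L, hN.of_smul_mem hbij.1 hNL hL, lt_of_le_of_ne hNL ?_, hdim ▸ hlt, ?_⟩
    · intro hEq
      apply hP
      rw [← hrange, LinearMap.range_eq_bot, ← LinearMap.ker_eq_top,
        ker_smulToQuotient hbij.1 hL, ← hEq, inf_idem, Submodule.comap_subtype_self]
    · have : Subsingleton (N ⧸ (N ⊓ L).comap N.subtype) := by
        rw [Submodule.Quotient.subsingleton_iff, inf_eq_left.2 hNL,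
          Submodule.comap_subtype_self]
      rw [dimSupp_eq_bot]
      exact bot_le.trans_lt hlt
  · rintro hsub ⟨N', -, hlt, hdim, -⟩
    let L := N' ⊓ N.comap (LinearMap.lsmul R M h)
    have hL : ∀ x ∈ L, h • x ∈ N := fun x hx => hx.2
    refine ((dimSupp_quotient_mono (N := N) (inf_le_left : L ≤ N')).trans_lt hdim).ne ?_
    rw [← dimSupp_range_smulToQuotient hbij.1 hL]
    refine hsub _ fun hbot => ?_
    obtain ⟨x, hxN', hxN, hx⟩ := hN.exists_smul_mem hlt
    have hker : (⟨x, hxN', hx⟩ : L) ∈ LinearMap.ker (smulToQuotient hL) := by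
      rw [LinearMap.ker_eq_top.2 (LinearMap.range_eq_bot.1 hbot)]
      trivial
    rw [ker_smulToQuotient hbij.1 hL] at hker
    exact hxN hker.1
end
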